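/- The nested transfer matrices intertwine with the product of R-matrices: 𝒯̌^{(1,m,m-1,…,2)}(z) ∘ 𝓡̌^{(1;m,…,2)} = 𝓡̌^{(1;m,…,2)} ∘ 𝒯̌^{(m,m-1,…,1)}(z) as operators on W̌-valued functions of λ, for all z ∈ ℂ (at parameter values with all theta denominators nonzero), where 𝓡̌^{(1;m,…,2)} = Ř^{(1m)}(t_1-t_m, λ̌) Ř^{(1,m-1)}(t_1-t_{m-1}, λ̌+γȟ^{(m)}) ⋯ Ř^{(12)}(t_1-t_2, λ̌+γ∑_{k=3}^m ȟ^{(k)}) acts by pointwise multiplication in λ. -/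

import Mathlib

/-!
The relation is a consequence of the dynamical Yang–Baxter equation alone.

*Dynamical Yang–Baxter equation.* All entries of the R-matrix are ratios of theta functions, and on
three tensor factors the equation reduces to finitely many identities between them
(`coef_kij`, …, `coef_7`, and the elementary `alpha_exchange`) that follow from the three-term identity
`theta_fay`. It follows from the product formula `theta_mul_theta`, which expresses
`θ(x+y)θ(x-y)` as a determinant. The result is `dybe_three` for three factors, and `dynR_dybe` for
three factors of a larger product with an additional dynamical shift by spectator factors.

*Exchange relation.* The auxiliary space is treated as one more tensor factor `o`. After replacing
`λ̌` by `μ = λ̌ + γ ∑_k ȟ^{(k)}`, both the monodromy matrices and `𝓡̌^{(1;m,…,2)}` are ordered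
products (`chain`) of R-matrices with dynamical argument `μ - γ ∑_{r∈S} ȟ^{(r)}`, where `S` consists
of the factors further to the right and possibly the auxiliary one. For the factors of
`𝓡̌^{(1;m,…,2)}` this rewrites a shift by the factors to the left of position `k` as one by the
remaining factors; the contribution of the two factors on which the R-matrix acts is irrelevant,
since only differences of the components at the labels carried by these two factors occur
(`scr_row`). Induction on the length, using `dynR_dybe` to
pass one factor and `dynR_comm` for operators on disjoint pairs of factors, gives `chain_exchange`,
the intertwining relation before taking the trace.

*Trace.* Every R-matrix permutes labels, so the total weight is conserved (`chain_congr`). Hence the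
conjugation by `Γ̌^{(1,…,m)}` amounts to the passage from `λ̌` to `μ`, and each term of the trace is
the value of a `chain` on a function supported on a single label of the auxiliary factor
(`cTransfer_eq`). On such a term the shift `Γ̌^{(0)}` of `λ` is exactly the shift by the weight of the
auxiliary factor which `chain_exchange` requires, and the relation holds term by term.
-/

noncomputable section

open Complex BigOperators

namespace Ruijsenaars

/-- Jacobi's first theta function
`θ(z) = -∑_{j∈ℤ} exp(πi(j+1/2)²τ + 2πi(j+1/2)(z+1/2))`. -/
def theta (τ z : ℂ) : ℂ :=
  - ∑' j : ℤ, Complex.exp (Real.pi * Complex.I * ((j : ℂ) + 1 / 2) ^ 2 * τ +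
      2 * Real.pi * Complex.I * ((j : ℂ) + 1 / 2) * (z + 1 / 2))

/-- `α(z,w) = θ(z)θ(w+γ)/(θ(z-γ)θ(w))`. -/
def alpha (τ γ z w : ℂ) : ℂ :=
  theta τ z * theta τ (w + γ) / (theta τ (z - γ) * theta τ w)

/-- `β(z,w) = -θ(z+w)θ(γ)/(θ(z-γ)θ(w))`. -/
def beta (τ γ z w : ℂ) : ℂ :=
  - (theta τ (z + w) * theta τ γ / (theta τ (z - γ) * theta τ w))

/-- The elliptic dynamical R-matrix `R(z,λ)` on `ℂ^N ⊗ ℂ^N`,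
`R(z,λ) = ∑_i e_{ii}⊗e_{ii} + ∑_{i≠j} α(z,λ_i-λ_j) e_{ii}⊗e_{jj}
        + ∑_{i≠j} β(z,λ_i-λ_j) e_{ij}⊗e_{ji}`,
written as a matrix on the standard basis of `ℂ^N ⊗ ℂ^N`: the entry at row `(i,j)`,
column `(k,l)` is the coefficient `R_{ik,jl}(z,λ)` of `e_{ik} ⊗ e_{jl}`. -/
def Rm (τ γ : ℂ) {N : ℕ} (z : ℂ) (lam : Fin N → ℂ) :
    Matrix (Fin N × Fin N) (Fin N × Fin N) ℂ := fun p q =>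
  if p = q then (if p.1 = p.2 then 1 else alpha τ γ z (lam p.1 - lam p.2))
  else if p.1 = q.2 ∧ p.2 = q.1 then beta τ γ z (lam p.1 - lam p.2) else 0

/-- The shift `λ ↦ λ - γ ω_j` by the `j`-th standard basis vector. -/
def shift1 (γ : ℂ) {N : ℕ} (lam : Fin N → ℂ) (j : Fin N) : Fin N → ℂ :=
  fun i => lam i - if i = j then γ else 0

/-- The embedding of the index set `{2,…,N}` (encoded as `Fin (N-1)`) into
`{1,…,N}` (encoded as `Fin N`). -/
def iot {N : ℕ} (k : Fin (N - 1)) : Fin N := ⟨k.1 + 1, by omega⟩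

/-- `Ř^{(0k)}(zz, λ̌ + cc·∑_{r∈S} ȟ^{(r)})` acting on `ℂ^{N-1} ⊗ W̌`,
`W̌ = (ℂ^{N-1})^{⊗m}`; the dynamical argument is evaluated via the weights of
the tensor factors in `S`. -/
def cR0k (τ γ zz cc : ℂ) {N mm : ℕ} (lc : Fin (N - 1) → ℂ) (k : Fin mm)
    (S : Finset (Fin mm)) :
    Matrix (Fin (N - 1) × (Fin mm → Fin (N - 1)))
      (Fin (N - 1) × (Fin mm → Fin (N - 1))) ℂ := fun p q =>
  if ∀ j, j ≠ k → p.2 j = q.2 j then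
    Rm τ γ zz (fun i => lc i + cc * (((S.filter (fun r => q.2 r = i)).card : ℕ) : ℂ))
      (p.1, p.2 k) (q.1, q.2 k)
  else 0

/-- The ordered product
`Ř^{(0,k_1)}(z-t_{k_1}, λ̌ + cc·∑_{r=2}^m ȟ^{(k_r)}) ⋯ Ř^{(0,k_m)}(z-t_{k_m}, λ̌)`
over a sequence `(k_1,…,k_m)`. -/
def cProd (τ γ z cc : ℂ) {N mm : ℕ} (lc : Fin (N - 1) → ℂ) (t : Fin mm → ℂ) :
    List (Fin mm) →
      Matrix (Fin (N - 1) × (Fin mm → Fin (N - 1)))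
        (Fin (N - 1) × (Fin mm → Fin (N - 1))) ℂ
  | [] => 1
  | k :: rest => cR0k τ γ (z - t k) cc lc k rest.toFinset * cProd τ γ z cc lc t rest

/-- The total shift `Γ̌^{(1,…,m)}` (for `sign = -1`), resp. its inverse
(for `sign = 1`), acting on `W̌`-valued functions of `λ ∈ ℂ^N`. -/
def gammaTot (γ sign : ℂ) {N mm : ℕ}
    (ψ : (Fin N → ℂ) → (Fin mm → Fin (N - 1)) → ℂ) :
    (Fin N → ℂ) → (Fin mm → Fin (N - 1)) → ℂ := fun lam f =>
  ψ (fun a => lam a + sign * γ *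
      (((Finset.univ.filter (fun k => iot (f k) = a)).card : ℕ) : ℂ)) f

/-- The nested transfer matrix `𝒯̌^{(k_1,…,k_m)}(z)`, defined by
`Γ̌^{(1,…,m)} 𝒯̌^{(k_1,…,k_m)}(z) (Γ̌^{(1,…,m)})⁻¹
 = tr^{(0)}[Ř^{(0,k_1)}(z-t_{k_1}, λ̌-γ∑_{r≥2}ȟ^{(k_r)}) ⋯ Ř^{(0,k_m)}(z-t_{k_m}, λ̌) Γ̌^{(0)}]`. -/
def cTransfer (τ γ : ℂ) {N mm : ℕ} (t : Fin mm → ℂ) (ks : List (Fin mm)) (z : ℂ)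
    (ψ : (Fin N → ℂ) → (Fin mm → Fin (N - 1)) → ℂ) :
    (Fin N → ℂ) → (Fin mm → Fin (N - 1)) → ℂ :=
  gammaTot γ 1 (fun lam f =>
    ∑ j : Fin (N - 1), ∑ g,
      cProd τ γ z (-γ) (fun a => lam (iot a)) t ks (j, f) (j, g) *
        (gammaTot γ (-1) ψ) (shift1 γ lam (iot j)) g)

/-- The sequence `(m, m-1, …, 1)`. -/
def seqRev (mm : ℕ) : List (Fin mm) := (List.finRange mm).reverse

/-- `Ř^{(ab)}(zz, λ̌ + γ∑_{r∈S} ȟ^{(r)})` acting on the factors `a` and `b`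
of `W̌ = (ℂ^{N-1})^{⊗m}`. -/
def cRab (τ γ zz : ℂ) {N mm : ℕ} (lc : Fin (N - 1) → ℂ) (a b : Fin mm)
    (S : Finset (Fin mm)) :
    Matrix (Fin mm → Fin (N - 1)) (Fin mm → Fin (N - 1)) ℂ := fun f g =>
  if ∀ j, j ≠ a → j ≠ b → f j = g j then
    Rm τ γ zz (fun i => lc i + γ * (((S.filter (fun r => g r = i)).card : ℕ) : ℂ))
      (f a, f b) (g a, g b)
  else 0

/-- `𝓡̌^{(1;m,…,2)} = Ř^{(1m)}(t_1-t_m, λ̌) Ř^{(1,m-1)}(t_1-t_{m-1}, λ̌+γȟ^{(m)})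
⋯ Ř^{(12)}(t_1-t_2, λ̌+γ∑_{k=3}^m ȟ^{(k)})` on `W̌`. -/
def scrR (τ γ : ℂ) {N mm : ℕ} (h0 : 0 < mm) (t : Fin mm → ℂ)
    (lc : Fin (N - 1) → ℂ) :
    Matrix (Fin mm → Fin (N - 1)) (Fin mm → Fin (N - 1)) ℂ :=
  (((List.finRange mm).reverse.dropLast).map
    (fun k => cRab τ γ (t ⟨0, h0⟩ - t k) lc ⟨0, h0⟩ k
      (Finset.univ.filter (fun r => k < r)))).prod

/-- The sequence `(1, m, m-1, …, 2)`. -/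
def seqOne (mm : ℕ) (h0 : 0 < mm) : List (Fin mm) :=
  (⟨0, h0⟩ : Fin mm) :: (List.finRange mm).reverse.dropLast

/-! ### The product formula and the three-term identity for theta functions -/

/-- The general term of the theta series with characteristic `s`. -/
def thTerm (τ s x : ℂ) (k : ℤ) : ℂ :=
  Complex.exp (2 * Real.pi * Complex.I * ((k : ℂ) + s) ^ 2 * τ +
    4 * Real.pi * Complex.I * ((k : ℂ) + s) * x)

lemma summable_exp_quad (σ : ℂ) (hσ : 0 < σ.im) (b c : ℂ) :
    Summable fun k : ℤ => ‖Complex.exp (Real.pi * Complex.I * (k : ℂ) ^ 2 * σ +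
      2 * Real.pi * Complex.I * (k : ℂ) * b + c)‖ := by
  have h := ((summable_jacobiTheta₂_term_iff b σ).mpr hσ).norm.mul_right ‖Complex.exp c‖
  refine h.congr fun k => ?_
  rw [← norm_mul, jacobiTheta₂_term, ← Complex.exp_add]
  congr 2
  ring

lemma summable_thTerm {τ : ℂ} (hτ : 0 < τ.im) (s x : ℂ) :
    Summable fun k => ‖thTerm τ s x k‖ := by
  have h2 : 0 < (2 * τ).im := by simpa using hτ
  refine (summable_exp_quad (2 * τ) h2 (2 * s * τ + 2 * x)
    (2 * Real.pi * Complex.I * s ^ 2 * τ + 4 * Real.pi * Complex.I * s * x)).congr fun k => ?_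
  rw [thTerm]
  congr 2
  ring

/-- The general term of the series defining `theta`, without the sign. -/
def theta1Term (τ z : ℂ) (j : ℤ) : ℂ :=
  Complex.exp (Real.pi * Complex.I * ((j : ℂ) + 1 / 2) ^ 2 * τ +
      2 * Real.pi * Complex.I * ((j : ℂ) + 1 / 2) * (z + 1 / 2))

lemma summable_theta1Term {τ : ℂ} (hτ : 0 < τ.im) (z : ℂ) :
    Summable fun k => ‖theta1Term τ z k‖ := by
  refine (summable_exp_quad τ hτ (τ / 2 + z + 1 / 2)
    (Real.pi * Complex.I * τ / 4 + Real.pi * Complex.I * (z + 1 / 2))).congr fun k => ?_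
  rw [theta1Term]
  congr 2
  ring

/-- The change of summation indices `(m, n) ↦ (m + n + 1, m - n)`: the image consists of the pairs
`(s, d)` of opposite parity, hence the two copies of `ℤ × ℤ`. -/
def paritySplit : (ℤ × ℤ) ⊕ (ℤ × ℤ) ≃ ℤ × ℤ where
  toFun p := Sum.elim (fun q => (q.1 + q.2, q.1 - q.2 - 1)) (fun q => (q.1 + q.2, q.1 - q.2)) p
  invFun p := if (p.1 + p.2) % 2 = 0 then Sum.inr ((p.1 + p.2) / 2, (p.1 - p.2) / 2)
    else Sum.inl ((p.1 + p.2 + 1) / 2, (p.1 - p.2 - 1) / 2)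
  left_inv p := by
    rcases p with ⟨k, l⟩ | ⟨k, l⟩
    · refine (if_neg (show ¬ (k + l + (k - l - 1)) % 2 = 0 by omega)).trans ?_
      simp only [Sum.elim_inl, Sum.inl.injEq, Prod.mk.injEq]
      omega
    · refine (if_pos (show (k + l + (k - l)) % 2 = 0 by omega)).trans ?_
      simp only [Sum.elim_inr, Sum.inr.injEq, Prod.mk.injEq]
      omega
  right_inv p := by
    obtain ⟨m, n⟩ := p
    simp only
    split_ifs with h
    · simp only [Sum.elim_inr, Prod.mk.injEq]; omega
    · simp only [Sum.elim_inl, Prod.mk.injEq]; omega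

/-- The classical product formula: `θ(x+y)θ(x-y)` is a `2 × 2` determinant in theta functions of
modulus `2τ`. -/
lemma theta_mul_theta {τ : ℂ} (hτ : 0 < τ.im) (x y : ℂ) :
    theta τ (x + y) * theta τ (x - y) =
      (∑' k, thTerm τ 0 x k) * (∑' k, thTerm τ (1 / 2) y k) -
      (∑' k, thTerm τ (1 / 2) x k) * (∑' k, thTerm τ 0 y k) := by
  have hA := fun x => summable_thTerm hτ 0 x
  have hB := fun x => summable_thTerm hτ (1 / 2) x
  have hT := fun x => summable_theta1Term hτ x
  have key : (∑' k, theta1Term τ (x + y) k) * (∑' k, theta1Term τ (x - y) k) =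
      (∑' k, thTerm τ 0 x k) * (∑' k, thTerm τ (1 / 2) y k) -
      (∑' k, thTerm τ (1 / 2) x k) * (∑' k, thTerm τ 0 y k) := by
    rw [tsum_mul_tsum_of_summable_norm (hT _) (hT _),
      tsum_mul_tsum_of_summable_norm (hA _) (hB _),
      tsum_mul_tsum_of_summable_norm (hB _) (hA _), ← paritySplit.tsum_eq, sub_eq_add_neg
        (tsum _), ← tsum_neg]
    have e1 : ∀ q : ℤ × ℤ, theta1Term τ (x + y) (paritySplit (Sum.inl q)).1 *
        theta1Term τ (x - y) (paritySplit (Sum.inl q)).2 =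
        thTerm τ 0 x q.1 * thTerm τ (1 / 2) y q.2 := by
      rintro ⟨k, l⟩
      simp only [paritySplit, Equiv.coe_fn_mk, Sum.elim_inl, theta1Term, thTerm,
        ← Complex.exp_add]
      rw [Complex.exp_eq_exp_iff_exists_int]
      refine ⟨k, ?_⟩
      push_cast
      ring
    have e2 : ∀ q : ℤ × ℤ, theta1Term τ (x + y) (paritySplit (Sum.inr q)).1 *
        theta1Term τ (x - y) (paritySplit (Sum.inr q)).2 =
        -(thTerm τ (1 / 2) x q.1 * thTerm τ 0 y q.2) := by
      rintro ⟨k, l⟩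
      simp only [paritySplit, Equiv.coe_fn_mk, Sum.elim_inr, theta1Term, thTerm,
        ← Complex.exp_add]
      rw [neg_eq_neg_one_mul, ← Complex.exp_pi_mul_I, ← Complex.exp_add,
        Complex.exp_eq_exp_iff_exists_int]
      refine ⟨k, ?_⟩
      push_cast
      ring
    have s1 := summable_mul_of_summable_norm (hA x) (hB y)
    have s2 := (summable_mul_of_summable_norm (hB x) (hA y)).neg
    refine HasSum.tsum_eq (HasSum.sum ?_ ?_)
    · exact s1.hasSum.congr_fun e1
    · exact s2.hasSum.congr_fun e2
  rw [← key]
  simp only [theta, theta1Term, neg_mul_neg]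

lemma theta_neg {τ : ℂ} (hτ : 0 < τ.im) (x : ℂ) : theta τ (-x) = -theta τ x := by
  -- The determinant in the product formula is antisymmetric in its two arguments.
  have h : ∀ a b : ℂ, theta τ a * theta τ b = -(theta τ a * theta τ (-b)) := by
    intro a b
    have h1 := theta_mul_theta hτ ((a + b) / 2) ((a - b) / 2)
    have h2 := theta_mul_theta hτ ((a - b) / 2) ((a + b) / 2)
    rw [show (a + b) / 2 + (a - b) / 2 = a by ring,
      show (a + b) / 2 - (a - b) / 2 = b by ring] at h1
    rw [show (a - b) / 2 + (a + b) / 2 = a by ring,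
      show (a - b) / 2 - (a + b) / 2 = -b by ring] at h2
    linear_combination h1 + h2
  by_cases h0 : theta τ x = 0
  · have := h (-x) (-x)
    rw [neg_neg, h0] at this
    rw [h0, neg_zero]
    exact mul_self_eq_zero.mp (by linear_combination this)
  · refine mul_left_cancel₀ h0 ?_
    linear_combination h x x

/-- The three-term (Weierstrass, Fay) identity, in a parametrisation without halves. -/
lemma theta_fay {τ : ℂ} (hτ : 0 < τ.im) (T B E G : ℂ) :
    theta τ (T + B) * theta τ B * (theta τ (T - E - G) * theta τ (G - E)) -
      theta τ (T + B - E) * theta τ (B + E) * (theta τ (T - G) * theta τ G) +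
      theta τ (T + B - G) * theta τ (B + G) * (theta τ (T - E) * theta τ E) = 0 := by
  have h : ∀ p q a b : ℂ, p + q = a → p - q = b → theta τ a * theta τ b =
      (∑' k, thTerm τ 0 p k) * (∑' k, thTerm τ (1 / 2) q k) -
      (∑' k, thTerm τ (1 / 2) p k) * (∑' k, thTerm τ 0 q k) := by
    rintro p q _ _ rfl rfl
    exact theta_mul_theta hτ p q
  rw [h (T / 2 + B) (T / 2) (T + B) B (by ring) (by ring),
    h (T / 2 - E) (T / 2 - G) (T - E - G) (G - E) (by ring) (by ring),
    h (T / 2 + B) (T / 2 - E) (T + B - E) (B + E) (by ring) (by ring),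
    h (T / 2) (T / 2 - G) (T - G) G (by ring) (by ring),
    h (T / 2 + B) (T / 2 - G) (T + B - G) (B + G) (by ring) (by ring),
    h (T / 2) (T / 2 - E) (T - E) E (by ring) (by ring)]
  ring

/-! ### Identities between the entries of the R-matrix -/

/-! Each of the following identities compares the coefficients of one component of a vector on the
two sides of the Yang–Baxter equation applied at the labels `(i, j, k)`. With `x = ν_i - ν_j` and
`y = ν_j - ν_k`, the lemmas `coef_kij`, `coef_jki` and `coef_kji` belong to the components at
`(k, i, j)`, `(j, k, i)` and `(k, j, i)` for distinct labels; `coef_4`, …, `coef_7` belong to two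
coinciding labels. -/

lemma coef_kij {τ : ℂ} (hτ : 0 < τ.im) {γ u v x y : ℂ} (hu : theta τ (u - γ) ≠ 0)
    (hv : theta τ (v - γ) ≠ 0) (hw : theta τ (u + v - γ) ≠ 0) (hx : theta τ x ≠ 0)
    (hy : theta τ y ≠ 0) (hxy : theta τ (x + y) ≠ 0) :
    alpha τ γ u x * beta τ γ (u + v) (x + y) * beta τ γ v (-x) +
      beta τ γ u x * beta τ γ (u + v) y * alpha τ γ v x =
    beta τ γ v y * alpha τ γ (u + v) x * beta τ γ u (x + y) := by
  have h := theta_fay hτ (v + x + y) u x (x + y)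
  rw [show v + x + y + u = u + v + x + y by ring, show v + x + y - x - (x + y) = v - x by ring,
    show x + y - x = y by ring, show u + v + x + y - x = u + v + y by ring,
    show v + x + y - (x + y) = v by ring, show u + v + x + y - (x + y) = u + v by ring,
    show v + x + y - x = v + y by ring] at h
  simp only [alpha, beta, theta_neg hτ, ← sub_eq_add_neg, ← add_assoc] at h ⊢
  field_simp
  linear_combination (-theta τ (x + γ) * theta τ γ ^ 2) * h

lemma coef_jki {τ : ℂ} (hτ : 0 < τ.im) {γ u v x y : ℂ} (hu : theta τ (u - γ) ≠ 0)
    (hv : theta τ (v - γ) ≠ 0) (hw : theta τ (u + v - γ) ≠ 0) (hx : theta τ x ≠ 0)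
    (hy : theta τ y ≠ 0) (hxy : theta τ (x + y) ≠ 0) :
    beta τ γ u x * alpha τ γ (u + v) y * beta τ γ v (x + y) =
    alpha τ γ v y * beta τ γ (u + v) (x + y) * beta τ γ u (-y) +
      beta τ γ v y * beta τ γ (u + v) x * alpha τ γ u y := by
  have h := theta_fay hτ (u + x + y) v y (x + y)
  rw [show u + x + y + v = u + v + x + y by ring, show u + x + y - y - (x + y) = u - y by ring,
    show x + y - y = x by ring, show u + v + x + y - y = u + v + x by ring,
    show u + x + y - (x + y) = u by ring, show u + v + x + y - (x + y) = u + v by ring,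
    show u + x + y - y = u + x by ring] at h
  simp only [alpha, beta, theta_neg hτ, ← sub_eq_add_neg, ← add_assoc] at h ⊢
  field_simp
  linear_combination (theta τ (y + γ) * theta τ γ ^ 2) * h

/-- For distinct labels, the only coefficient with two terms on each side; the three-term identity
is used twice. -/
lemma coef_kji {τ : ℂ} (hτ : 0 < τ.im) {γ u v x y : ℂ} (hu : theta τ (u - γ) ≠ 0)
    (hv : theta τ (v - γ) ≠ 0) (hw : theta τ (u + v - γ) ≠ 0) (hx : theta τ x ≠ 0)
    (hy : theta τ y ≠ 0) (hxy : theta τ (x + y) ≠ 0) :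
    alpha τ γ u x * beta τ γ (u + v) (x + y) * alpha τ γ v (-x) +
      beta τ γ u x * beta τ γ (u + v) y * beta τ γ v x =
    alpha τ γ v y * beta τ γ (u + v) (x + y) * alpha τ γ u (-y) +
      beta τ γ v y * beta τ γ (u + v) x * beta τ γ u y := by
  have h1 := theta_fay hτ (x + y - γ) γ (y - γ) (x - γ)
  rw [show x + y - γ + γ = x + y by ring, show x + y - γ - (y - γ) - (x - γ) = γ by ring,
    show x - γ - (y - γ) = x - y by ring, show x + y - (y - γ) = x + γ by ring,
    show γ + (y - γ) = y by ring, show x + y - γ - (x - γ) = y by ring,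
    show x + y - (x - γ) = y + γ by ring, show γ + (x - γ) = x by ring,
    show x + y - γ - (y - γ) = x by ring] at h1
  have h2 := theta_fay hτ (v + x + y) u y x
  rw [show v + x + y + u = u + v + x + y by ring, show v + x + y - y - x = v by ring,
    show u + v + x + y - y = u + v + x by ring,
    show v + x + y - x = v + y by ring, show u + v + x + y - x = u + v + y by ring,
    show v + x + y - y = v + x by ring] at h2
  have ex : theta τ (-x + γ) = - theta τ (x - γ) := by rw [← theta_neg hτ]; congr 1; ring
  have ey : theta τ (-y + γ) = - theta τ (y - γ) := by rw [← theta_neg hτ]; congr 1; ring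
  simp only [alpha, beta, theta_neg hτ, ex, ey, ← add_assoc] at h1 h2 ⊢
  field_simp
  linear_combination (theta τ γ * theta τ u * theta τ v * theta τ (u + v + x + y)) * h1 -
     (theta τ (x + y) * theta τ γ ^ 3) * h2

lemma coef_4 {τ : ℂ} (hτ : 0 < τ.im) {γ u v x : ℂ} (hu : theta τ (u - γ) ≠ 0)
    (hv : theta τ (v - γ) ≠ 0) (hw : theta τ (u + v - γ) ≠ 0) (hx : theta τ x ≠ 0)
    (hxg : theta τ (x - γ) ≠ 0) :
    alpha τ γ (u + v) x * beta τ γ v (x - γ) =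
      alpha τ γ v x * beta τ γ (u + v) (x - γ) * beta τ γ u (-x) +
        beta τ γ v x * alpha τ γ u x := by
  have h := theta_fay hτ (u + x - γ) v (x - γ) x
  rw [show u + x - γ + v = u + v + x - γ by ring, show u + x - γ - (x - γ) - x = u - x by ring,
    show x - (x - γ) = γ by ring, show u + v + x - γ - (x - γ) = u + v by ring,
    show v + (x - γ) = v + x - γ by ring, show u + x - γ - x = u - γ by ring,
    show u + v + x - γ - x = u + v - γ by ring,
    show u + x - γ - (x - γ) = u by ring] at h
  simp only [alpha, beta, theta_neg hτ, ← sub_eq_add_neg, ← add_sub_assoc] at h ⊢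
  field_simp
  linear_combination (theta τ γ * theta τ (x + γ)) * h

lemma coef_5 {τ : ℂ} (hτ : 0 < τ.im) {γ u v x : ℂ} (hu : theta τ (u - γ) ≠ 0)
    (hv : theta τ (v - γ) ≠ 0) (hw : theta τ (u + v - γ) ≠ 0) (hx : theta τ x ≠ 0)
    (hxg : theta τ (x - γ) ≠ 0) :
    beta τ γ (u + v) x =
      alpha τ γ v x * beta τ γ (u + v) (x - γ) * alpha τ γ u (-x) +
        beta τ γ v x * beta τ γ u x := by
  have h := theta_fay hτ (u + v) x γ v
  rw [show u + v - γ - v = u - γ by ring, show u + v + x - v = u + x by ring,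
    show u + v - v = u by ring, show x + v = v + x by ring] at h
  have ex : theta τ (-x + γ) = - theta τ (x - γ) := by rw [← theta_neg hτ]; congr 1; ring
  simp only [alpha, beta, theta_neg hτ, ex, ← add_sub_assoc] at h ⊢
  field_simp
  linear_combination (-theta τ γ) * h

lemma coef_6 {τ : ℂ} (hτ : 0 < τ.im) {γ u v x : ℂ} (hu : theta τ (u - γ) ≠ 0)
    (hv : theta τ (v - γ) ≠ 0) (hw : theta τ (u + v - γ) ≠ 0) (hx : theta τ x ≠ 0)
    (hxg : theta τ (x - γ) ≠ 0) :
    beta τ γ u (x - γ) * alpha τ γ (u + v) (-x) =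
      alpha τ γ v (-x) * beta τ γ u x +
        beta τ γ v (-x) * beta τ γ (u + v) (x - γ) * alpha τ γ u (-x) := by
  have h := theta_fay hτ (u + 2 * x - γ) (v - x) (x - γ) x
  rw [show u + 2 * x - γ + (v - x) = u + v + x - γ by ring,
    show u + 2 * x - γ - (x - γ) - x = u by ring, show x - (x - γ) = γ by ring,
    show u + v + x - γ - (x - γ) = u + v by ring, show v - x + (x - γ) = v - γ by ring,
    show u + 2 * x - γ - x = u + x - γ by ring, show u + v + x - γ - x = u + v - γ by ring,
    show v - x + x = v by ring, show u + 2 * x - γ - (x - γ) = u + x by ring] at h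
  have ex : theta τ (-x + γ) = - theta τ (x - γ) := by rw [← theta_neg hτ]; congr 1; ring
  simp only [alpha, beta, theta_neg hτ, ex, ← sub_eq_add_neg, ← add_sub_assoc] at h ⊢
  field_simp
  linear_combination (theta τ γ) * h

/-- The analogue of `coef_kji` when two of the three labels coincide. -/
lemma coef_7 {τ : ℂ} (hτ : 0 < τ.im) {γ u v x : ℂ} (hu : theta τ (u - γ) ≠ 0)
    (hv : theta τ (v - γ) ≠ 0) (hw : theta τ (u + v - γ) ≠ 0) (hx : theta τ x ≠ 0)
    (hxg : theta τ (x - γ) ≠ 0) :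
    alpha τ γ u (x - γ) * alpha τ γ v (γ - x) +
        beta τ γ u (x - γ) * beta τ γ (u + v) (-x) * beta τ γ v (x - γ) =
      alpha τ γ v (-x) * alpha τ γ u x +
        beta τ γ v (-x) * beta τ γ (u + v) (x - γ) * beta τ γ u (-x) := by
  have h1 := theta_fay hτ (2 * x - 2 * γ) γ (x - γ - γ) (x - γ)
  rw [show 2 * x - 2 * γ + γ = 2 * x - γ by ring,
    show 2 * x - 2 * γ - (x - γ - γ) - (x - γ) = γ by ring,
    show x - γ - (x - γ - γ) = γ by ring, show 2 * x - γ - (x - γ - γ) = x + γ by ring,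
    show γ + (x - γ - γ) = x - γ by ring, show 2 * x - 2 * γ - (x - γ) = x - γ by ring,
    show 2 * x - γ - (x - γ) = x by ring, show γ + (x - γ) = x by ring,
    show 2 * x - 2 * γ - (x - γ - γ) = x by ring] at h1
  have h2 := theta_fay hτ (u + 2 * x - γ) (v - x) x (2 * x - γ)
  rw [show u + 2 * x - γ + (v - x) = u + v + x - γ by ring,
    show u + 2 * x - γ - x - (2 * x - γ) = u - x by ring,
    show 2 * x - γ - x = x - γ by ring, show u + v + x - γ - x = u + v - γ by ring,
    show v - x + x = v by ring, show u + 2 * x - γ - (2 * x - γ) = u by ring,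
    show u + v + x - γ - (2 * x - γ) = u + v - x by ring,
    show v - x + (2 * x - γ) = v + x - γ by ring,
    show u + 2 * x - γ - x = u + x - γ by ring] at h2
  have e1 : theta τ (-x + γ) = - theta τ (x - γ) := by rw [← theta_neg hτ]; congr 1; ring
  have e2 : theta τ (γ - x) = - theta τ (x - γ) := by rw [← theta_neg hτ]; congr 1; ring
  have e3 : theta τ (γ - x + γ) = - theta τ (x - γ - γ) := by
    rw [← theta_neg hτ]; congr 1; ring
  simp only [alpha, beta, theta_neg hτ, e1, e2, e3, sub_add_cancel, ← sub_eq_add_neg,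
    ← add_sub_assoc] at h1 h2 ⊢
  field_simp
  linear_combination (theta τ u * theta τ v * theta τ (u + v - γ)) * h1 +
     (theta τ γ ^ 3) * h2

lemma alpha_exchange (τ γ z z' x y : ℂ) :
    alpha τ γ z x * alpha τ γ z' y = alpha τ γ z' x * alpha τ γ z y := by
  simp only [alpha, div_eq_mul_inv, mul_inv]
  ring

/-! ### The dynamical Yang–Baxter equation -/

/-- The two-term action of `R(z, ν)` on a pair of labels `(i, j)`: `X` and `Y` stand for the values
of a function at `(i, j)` and at the exchanged pair `(j, i)`. -/
def rAct (τ γ z : ℂ) {n : ℕ} (ν : Fin n → ℂ) (i j : Fin n) (X Y : ℂ) : ℂ :=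
  if i = j then X else alpha τ γ z (ν i - ν j) * X + beta τ γ z (ν i - ν j) * Y

/-- The dynamical Yang–Baxter equation on three tensor factors. -/
lemma dybe_three {τ : ℂ} (hτ : 0 < τ.im) {γ u v : ℂ} (hu : theta τ (u - γ) ≠ 0)
    (hv : theta τ (v - γ) ≠ 0) (hw : theta τ (u + v - γ) ≠ 0) {n : ℕ} {ν : Fin n → ℂ}
    (hν : ∀ p q, p ≠ q → theta τ (ν p - ν q) ≠ 0)
    (hν' : ∀ p q, p ≠ q → theta τ (ν p - ν q - γ) ≠ 0)
    (Φ A B A' B' : Fin n → Fin n → Fin n → ℂ)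
    (hB : ∀ i j k, B i j k = rAct τ γ v (shift1 γ ν i) j k (Φ i j k) (Φ i k j))
    (hA : ∀ i j k, A i j k = rAct τ γ (u + v) ν i k (B i j k) (B k j i))
    (hB' : ∀ i j k, B' i j k = rAct τ γ u ν i j (Φ i j k) (Φ j i k))
    (hA' : ∀ i j k, A' i j k = rAct τ γ (u + v) (shift1 γ ν j) i k (B' i j k) (B' k j i))
    (i j k : Fin n) :
    rAct τ γ u (shift1 γ ν k) i j (A i j k) (A j i k) =
      rAct τ γ v ν j k (A' i j k) (A' i k j) := by
  by_cases hij : i = j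
  · subst hij
    by_cases hik : i = k
    · subst hik
      simp [hA, hB, hA', hB', rAct]
    · have hki := Ne.symm hik
      simp [hA, hB, hA', hB', rAct, shift1, hik, hki]
      have c1 := alpha_exchange τ γ (u + v) v (ν i - ν k) (ν i - ν k - γ)
      have c2 := coef_4 hτ hu hv hw (hν i k hik) (hν' i k hik)
      have c3 := coef_5 hτ hu hv hw (hν i k hik) (hν' i k hik)
      rw [show ν i - γ - ν k = ν i - ν k - γ by ring, show ν k - ν i = -(ν i - ν k) by ring]
      linear_combination Φ i i k * c1 + Φ i k i * c2 + Φ k i i * c3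
  · have hji := Ne.symm hij
    by_cases hik : i = k
    · subst hik
      simp [hA, hB, hA', hB', rAct, shift1, hij, hji]
      have c1 := coef_6 hτ hu hv hw (hν i j hij) (hν' i j hij)
      have c2 := coef_7 hτ hu hv hw (hν i j hij) (hν' i j hij)
      have c3 := coef_6 hτ (x := γ - (ν i - ν j)) hv hu (by rwa [add_comm])
        (by rw [← neg_sub, theta_neg hτ]; exact neg_ne_zero.mpr (hν' i j hij))
        (by rw [show γ - (ν i - ν j) - γ = -(ν i - ν j) by ring, theta_neg hτ]
            exact neg_ne_zero.mpr (hν i j hij))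
      rw [show γ - (ν i - ν j) - γ = -(ν i - ν j) by ring, add_comm v u, neg_sub γ] at c3
      rw [show ν i - γ - ν j = ν i - ν j - γ by ring, show ν j - ν i = -(ν i - ν j) by ring,
        show ν j - (ν i - γ) = γ - (ν i - ν j) by ring]
      linear_combination Φ j i i * c1 + Φ i j i * c2 - Φ i i j * c3
    · have hki := Ne.symm hik
      by_cases hjk : j = k
      · subst hjk
        simp [hA, hB, hA', hB', rAct, shift1, hij, hji]
        have hx : theta τ (ν i - ν j + γ) ≠ 0 := by
          rw [show ν i - ν j + γ = -(ν j - ν i - γ) by ring, theta_neg hτ]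
          exact neg_ne_zero.mpr (hν' j i hji)
        have hx' : theta τ (ν i - ν j + γ - γ) ≠ 0 := by
          rw [add_sub_cancel_right]; exact hν i j hij
        have c1 := alpha_exchange τ γ u (u + v) (ν i - ν j + γ) (ν i - ν j)
        have c2 := coef_4 hτ hv hu (by rwa [add_comm]) hx hx'
        have c3 := coef_5 hτ hv hu (by rwa [add_comm]) hx hx'
        rw [add_sub_cancel_right, add_comm v u] at c2 c3
        rw [show ν i - (ν j - γ) = ν i - ν j + γ by ring,
          show ν j - γ - ν i = -(ν i - ν j + γ) by ring]
        linear_combination Φ i j j * c1 - Φ j i j * c2 - Φ j j i * c3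
      · have hkj := Ne.symm hjk
        simp [hA, hB, hA', hB', rAct, shift1, hij, hji, hik, hki, hjk, hkj]
        have e : ν i - ν k = ν i - ν j + (ν j - ν k) := by ring
        have hik' : theta τ (ν i - ν j + (ν j - ν k)) ≠ 0 := e ▸ hν i k hik
        have c1 := coef_kij hτ hu hv hw (hν i j hij) (hν j k hjk) hik'
        have c2 := coef_jki hτ hu hv hw (hν i j hij) (hν j k hjk) hik'
        have c3 := coef_kji hτ hu hv hw (hν i j hij) (hν j k hjk) hik'
        have c4 := alpha_exchange τ γ u (u + v) (ν i - ν j) (ν i - ν j + (ν j - ν k))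
        have c5 := alpha_exchange τ γ (u + v) v (ν j - ν k) (ν i - ν j + (ν j - ν k))
        rw [e, show ν k - ν j = -(ν j - ν k) by ring, show ν j - ν i = -(ν i - ν j) by ring]
        linear_combination Φ k i j * c1 + Φ j k i * c2 + Φ k j i * c3 +
          (Φ i k j * beta τ γ v (ν j - ν k)) * c4 + (Φ j i k * beta τ γ u (ν i - ν j)) * c5

lemma rAct_comm (τ γ z z' : ℂ) {n : ℕ} (ν ν' : Fin n → ℂ) (i j k l : Fin n)
    (X₁ X₂ Y₁ Y₂ : ℂ) :
    rAct τ γ z ν i j (rAct τ γ z' ν' k l X₁ X₂) (rAct τ γ z' ν' k l Y₁ Y₂) =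
      rAct τ γ z' ν' k l (rAct τ γ z ν i j X₁ Y₁) (rAct τ γ z ν i j X₂ Y₂) := by
  simp only [rAct]
  split_ifs <;> ring

/-- The multiplicity of the label `i` among the tensor factors in `S`, i.e. the `i`-th component of
the weight of those factors on the basis vector labelled by `f`. -/
def wt {ι : Type*} [DecidableEq ι] {n : ℕ} (S : Finset ι) (f : ι → Fin n) (i : Fin n) : ℂ :=
  (((S.filter fun r => f r = i).card : ℕ) : ℂ)

/-- The operator `R^{(ab)}(z, μ - γ ∑_{r∈S} h^{(r)})`, acting on the components
`φ : (ι → Fin n) → ℂ` of vectors in `(ℂⁿ)^{⊗ι}`. -/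
def dynR (τ γ z : ℂ) {ι : Type*} [DecidableEq ι] {n : ℕ} (μ : Fin n → ℂ) (a b : ι)
    (S : Finset ι) (φ : (ι → Fin n) → ℂ) (f : ι → Fin n) : ℂ :=
  rAct τ γ z (fun i => μ i - γ * wt S f i) (f a) (f b) (φ f) (φ (f ∘ Equiv.swap a b))

section Dynamical

variable {ι : Type*} [DecidableEq ι] {n : ℕ}

lemma wt_insert {c : ι} {S : Finset ι} (hc : c ∉ S) (f : ι → Fin n) (i : Fin n) :
    wt (insert c S) f i = wt S f i + if f c = i then 1 else 0 := by
  unfold wt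
  rw [Finset.filter_insert]
  split_ifs
  · rw [Finset.card_insert_of_notMem (by simp [hc])]
    push_cast
    ring
  · simp

lemma wt_congr {S : Finset ι} {f g : ι → Fin n} (h : ∀ r ∈ S, f r = g r) : wt S f = wt S g := by
  funext i
  unfold wt
  rw [Finset.filter_congr fun r hr => by rw [h r hr]]

lemma wt_comp_swap {S : Finset ι} {a b : ι} (h : a ∈ S ↔ b ∈ S) (f : ι → Fin n) :
    wt S (f ∘ Equiv.swap a b) = wt S f := by
  have m : ∀ r, Equiv.swap a b r ∈ S ↔ r ∈ S := by
    intro r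
    rw [Equiv.swap_apply_def]
    split_ifs with h1 h2
    · rw [h1, h]
    · rw [h2, h]
    · rfl
  funext i
  unfold wt
  congr 1
  refine Finset.card_bij (fun r _ => Equiv.swap a b r) ?_ ?_ ?_
  · intro r hr
    simp only [Finset.mem_filter, Function.comp_apply] at hr ⊢
    exact ⟨(m r).mpr hr.1, hr.2⟩
  · intro r _ s _ hrs
    exact (Equiv.swap a b).injective hrs
  · intro r hr
    simp only [Finset.mem_filter, Function.comp_apply] at hr ⊢
    exact ⟨Equiv.swap a b r, ⟨(m r).mpr hr.1, by rw [Equiv.swap_apply_self]; exact hr.2⟩,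
      Equiv.swap_apply_self _ _ _⟩

/-- Operators on disjoint pairs of factors commute, provided each conserves the weights on which
the other depends. -/
lemma dynR_comm (τ γ z z' : ℂ) (μ μ' : Fin n → ℂ) {a b c d : ι} {S T : Finset ι}
    (hac : a ≠ c) (had : a ≠ d) (hbc : b ≠ c) (hbd : b ≠ d)
    (hS : c ∈ S ↔ d ∈ S) (hT : a ∈ T ↔ b ∈ T) (φ : (ι → Fin n) → ℂ) :
    dynR τ γ z μ a b S (dynR τ γ z' μ' c d T φ) =
      dynR τ γ z' μ' c d T (dynR τ γ z μ a b S φ) := by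
  funext f
  have e : (f ∘ Equiv.swap a b) ∘ Equiv.swap c d = (f ∘ Equiv.swap c d) ∘ Equiv.swap a b := by
    funext r
    simp only [Function.comp_apply]
    congr 1
    simp only [Equiv.swap_apply_def]
    grind
  simp only [dynR, wt_comp_swap hS, wt_comp_swap hT, e, Function.comp_apply,
    Equiv.swap_apply_of_ne_of_ne hac had, Equiv.swap_apply_of_ne_of_ne hbc hbd,
    Equiv.swap_apply_of_ne_of_ne hac.symm hbc.symm,
    Equiv.swap_apply_of_ne_of_ne had.symm hbd.symm]
  exact rAct_comm ..

/-- The dynamical Yang–Baxter equation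
`R^{ab}(u, μ-γh^c) R^{ac}(u+v, μ) R^{bc}(v, μ-γh^a) = R^{bc}(v, μ) R^{ac}(u+v, μ-γh^b) R^{ab}(u, μ)`
on three factors of a larger tensor product. -/
lemma dynR_dybe {τ : ℂ} (hτ : 0 < τ.im) {γ u v w : ℂ} (hw' : u + v = w)
    (hu : theta τ (u - γ) ≠ 0)
    (hv : theta τ (v - γ) ≠ 0) (hw : theta τ (w - γ) ≠ 0) {μ : Fin n → ℂ} {a b c : ι}
    {S : Finset ι} (hab : a ≠ b) (hac : a ≠ c) (hbc : b ≠ c)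
    (ha : a ∉ S) (hb : b ∉ S) (hc : c ∉ S)
    (hμ : ∀ k : ℤ, |k| ≤ (S.card : ℤ) + 1 → ∀ p q, p ≠ q → theta τ (μ p - μ q + k * γ) ≠ 0)
    (φ : (ι → Fin n) → ℂ) :
    dynR τ γ u μ a b (insert c S) (dynR τ γ w μ a c S (dynR τ γ v μ b c (insert a S) φ)) =
      dynR τ γ v μ b c S (dynR τ γ w μ a c (insert b S) (dynR τ γ u μ a b S φ)) := by
  subst hw'
  funext f
  -- `s i j k` is `f` with the labels of the factors `a`, `b`, `c` replaced by `i`, `j`, `k`. The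
  -- operators only mix these functions, which reduces the claim to three tensor factors.
  set s : Fin n → Fin n → Fin n → ι → Fin n := fun i j k =>
    Function.update (Function.update (Function.update f a i) b j) c k with hs
  have sa : ∀ i j k, s i j k a = i := fun i j k => by simp [hs, hab, hac]
  have sb : ∀ i j k, s i j k b = j := fun i j k => by simp [hs, hbc]
  have sc : ∀ i j k, s i j k c = k := fun i j k => by simp [hs]
  have so : ∀ i j k r, r ≠ a → r ≠ b → r ≠ c → s i j k r = f r := fun i j k r h1 h2 h3 => by
    simp [hs, h1, h2, h3]
  have sf : s (f a) (f b) (f c) = f := by simp [hs]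
  have ext : ∀ g i j k, g a = i → g b = j → g c = k →
      (∀ r, r ≠ a → r ≠ b → r ≠ c → g r = f r) → g = s i j k := by
    intro g i j k h1 h2 h3 h4
    funext r
    by_cases hra : r = a
    · rw [hra, h1, sa]
    by_cases hrb : r = b
    · rw [hrb, h2, sb]
    by_cases hrc : r = c
    · rw [hrc, h3, sc]
    rw [h4 r hra hrb hrc, so i j k r hra hrb hrc]
  have tab : ∀ i j k, s i j k ∘ Equiv.swap a b = s j i k := fun i j k => by
    refine ext _ _ _ _ (by simp [sb]) (by simp [sa]) ?_ fun r h1 h2 h3 => ?_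
    · rw [Function.comp_apply, Equiv.swap_apply_of_ne_of_ne hac.symm hbc.symm, sc]
    · rw [Function.comp_apply, Equiv.swap_apply_of_ne_of_ne h1 h2, so _ _ _ _ h1 h2 h3]
  have tac : ∀ i j k, s i j k ∘ Equiv.swap a c = s k j i := fun i j k => by
    refine ext _ _ _ _ (by simp [sc]) ?_ (by simp [sa]) fun r h1 h2 h3 => ?_
    · rw [Function.comp_apply, Equiv.swap_apply_of_ne_of_ne hab.symm hbc, sb]
    · rw [Function.comp_apply, Equiv.swap_apply_of_ne_of_ne h1 h3, so _ _ _ _ h1 h2 h3]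
  have tbc : ∀ i j k, s i j k ∘ Equiv.swap b c = s i k j := fun i j k => by
    refine ext _ _ _ _ ?_ (by simp [sc]) (by simp [sb]) fun r h1 h2 h3 => ?_
    · rw [Function.comp_apply, Equiv.swap_apply_of_ne_of_ne hab hac, sa]
    · rw [Function.comp_apply, Equiv.swap_apply_of_ne_of_ne h2 h3, so _ _ _ _ h1 h2 h3]
  have wS : ∀ i j k, wt S (s i j k) = wt S f := fun i j k => wt_congr fun r hr =>
    so i j k r (fun h => ha (h ▸ hr)) (fun h => hb (h ▸ hr)) (fun h => hc (h ▸ hr))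
  set ν : Fin n → ℂ := fun i => μ i - γ * wt S f i with hνdef
  have sh : ∀ x ∉ S, ∀ i j k, (fun p => μ p - γ * wt (insert x S) (s i j k) p) =
      shift1 γ ν (s i j k x) := by
    intro x hx i j k
    funext p
    simp only [wt_insert hx, wS, shift1, hνdef, eq_comm (a := p)]
    split_ifs <;> ring
  have diff : ∀ p q, ∃ k : ℤ, |k| ≤ S.card ∧ ν p - ν q = μ p - μ q + k * γ := by
    intro p q
    refine ⟨((S.filter fun r => f r = q).card : ℤ) - ((S.filter fun r => f r = p).card : ℤ),
      ?_, ?_⟩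
    · have h1 := Finset.card_filter_le S (fun r => f r = p)
      have h2 := Finset.card_filter_le S (fun r => f r = q)
      rw [abs_le]
      omega
    · simp only [hνdef, wt]
      push_cast
      ring
  have key := dybe_three hτ hu hv hw (ν := ν) ?_ ?_ (fun i j k => φ (s i j k))
    (fun i j k => dynR τ γ (u + v) μ a c S (dynR τ γ v μ b c (insert a S) φ) (s i j k))
    (fun i j k => dynR τ γ v μ b c (insert a S) φ (s i j k))
    (fun i j k => dynR τ γ (u + v) μ a c (insert b S) (dynR τ γ u μ a b S φ) (s i j k))
    (fun i j k => dynR τ γ u μ a b S φ (s i j k)) ?_ ?_ ?_ ?_ (f a) (f b) (f c)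
  · have e1 := fun ψ => dynR.eq_1 τ γ u μ a b (insert c S) ψ (s (f a) (f b) (f c))
    have e2 := fun ψ => dynR.eq_1 τ γ v μ b c S ψ (s (f a) (f b) (f c))
    rw [sh c hc, tab, sa, sb, sc] at e1
    simp only [wS, tbc, sb, sc] at e2
    simp only [sf] at e1 e2 key
    exact (e1 _).trans (key.trans (e2 _).symm)
  · intro p q hpq
    obtain ⟨k, hk, e⟩ := diff p q
    rw [e]
    exact hμ k (by linarith) p q hpq
  · intro p q hpq
    obtain ⟨k, hk, e⟩ := diff p q
    rw [e, show μ p - μ q + k * γ - γ = μ p - μ q + ((k - 1 : ℤ) : ℂ) * γ by push_cast; ring]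
    refine hμ (k - 1) ?_ p q hpq
    rw [abs_le] at hk ⊢
    omega
  · intro i j k
    simp only [dynR, sh a ha, tbc, sa, sb, sc]
  · intro i j k
    rw [dynR, tac, sa, sc, wS]
  · intro i j k
    rw [dynR, tab, sa, sb, wS]
  · intro i j k
    rw [dynR, sh b hb, tac, sa, sb, sc]

/-! ### Ordered products of R-matrices and the exchange relation -/

/-- For `L = [k_1, …, k_s]`, the ordered product
`R^{(a k_1)}(t_a - t_{k_1}, μ - γ ∑_{r∈E} h^{(r)} - γ ∑_{r≥2} h^{(k_r)}) ⋯
R^{(a k_s)}(t_a - t_{k_s}, μ - γ ∑_{r∈E} h^{(r)})`. Both the monodromy matrices and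
`𝓡̌^{(1;m,…,2)}` are of this form. -/
def chain (τ γ : ℂ) (t : ι → ℂ) (μ : Fin n → ℂ) (a : ι) (E : Finset ι) :
    List ι → ((ι → Fin n) → ℂ) → (ι → Fin n) → ℂ
  | [], φ => φ
  | k :: L, φ => dynR τ γ (t a - t k) μ a k (E ∪ L.toFinset) (chain τ γ t μ a E L φ)

lemma dynR_chain_comm (τ γ z : ℂ) (t : ι → ℂ) (μ μ' : Fin n → ℂ) {a c d : ι} {S E : Finset ι}
    (hca : c ≠ a) (hda : d ≠ a) (hcE : c ∉ E) (hdE : d ∉ E) (ha : a ∈ S) :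
    ∀ (L : List ι) (φ : (ι → Fin n) → ℂ), c ∉ L → d ∉ L → (∀ k ∈ L, k ∈ S) →
      dynR τ γ z μ' c d S (chain τ γ t μ a E L φ) =
        chain τ γ t μ a E L (dynR τ γ z μ' c d S φ)
  | [], _, _, _, _ => rfl
  | k :: L, φ, hc, hd, hS => by
    simp only [List.mem_cons, not_or] at hc hd
    rw [chain, chain, dynR_comm _ _ _ _ _ _ hca hc.1 hda hd.1
      (by simp [ha, hS k List.mem_cons_self]) (by simp [hcE, hdE, hc.2, hd.2]),
      dynR_chain_comm τ γ z t μ μ' hca hda hcE hdE ha L φ hc.2 hd.2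
        fun r hr => hS r (List.mem_cons_of_mem _ hr)]

/-- The exchange relation: moving the factor `a` from the front to the end of the monodromy
matrix with auxiliary factor `o`. -/
lemma chain_exchange {τ : ℂ} (hτ : 0 < τ.im) {γ : ℂ} {t : ι → ℂ} {μ : Fin n → ℂ} {o a : ι}
    (hoa : o ≠ a) {K : ℤ} (hta : theta τ (t o - t a - γ) ≠ 0)
    (hμ : ∀ k : ℤ, |k| ≤ K → ∀ p q, p ≠ q → theta τ (μ p - μ q + k * γ) ≠ 0) :
    ∀ (L : List ι) (φ : (ι → Fin n) → ℂ), o ∉ L → a ∉ L → L.Nodup → (L.length : ℤ) ≤ K →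
      (∀ k ∈ L, theta τ (t o - t k - γ) ≠ 0 ∧ theta τ (t a - t k - γ) ≠ 0) →
      chain τ γ t μ o ∅ (a :: L) (chain τ γ t μ a {o} L φ) =
        chain τ γ t μ a ∅ L (chain τ γ t μ o ∅ (L ++ [a]) φ)
  | [], _, _, _, _, _, _ => rfl
  | k :: L, φ, ho, ha, hL, hK, ht => by
    simp only [List.mem_cons, not_or] at ho ha
    rw [List.nodup_cons] at hL
    have ih := chain_exchange hτ hoa hta hμ L φ ho.2 ha.2 hL.2
      (by rw [List.length_cons] at hK; push_cast at hK; linarith)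
      fun r hr => ht r (List.mem_cons_of_mem _ hr)
    have e1 : (∅ : Finset ι) ∪ (k :: L).toFinset = insert k L.toFinset := by simp
    have e2 : ({o} : Finset ι) ∪ L.toFinset = insert o L.toFinset := by
      rw [Finset.insert_eq]
    have e3 : (∅ : Finset ι) ∪ (L ++ [a]).toFinset = insert a L.toFinset := by
      ext x; simp
    simp only [chain, List.cons_append, e1, e2, e3, Finset.empty_union] at ih ⊢
    rw [← dynR_chain_comm _ _ _ _ _ _ hoa.symm (Ne.symm ho.1) (by simp) (by simp)
        (by simp) L _ ha.2 hL.1 (by simp +contextual),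
      dynR_dybe hτ (sub_add_sub_cancel _ _ _) hta (ht k List.mem_cons_self).2
        (ht k List.mem_cons_self).1 hoa ho.1 ha.1 (by simpa using ho.2) (by simpa using ha.2)
        (by simpa using hL.1), ih,
      dynR_chain_comm _ _ _ _ _ _ hoa (Ne.symm ha.1) (by simp) (by simp) (by simp) L _ ho.2 hL.1
        (by simp +contextual)]
    intro c hc
    refine hμ c (hc.trans ?_)
    have := L.toFinset_card_le
    rw [List.length_cons] at hK
    push_cast at hK
    have h2 : (L.toFinset.card : ℤ) ≤ L.length := by exact_mod_cast this
    linarith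

/-- The value of `chain … φ` at `f` only involves the values of `φ` at rearrangements of `f`. -/
lemma chain_congr [Fintype ι] (τ γ : ℂ) (t : ι → ℂ) (μ : Fin n → ℂ) (a : ι) (E : Finset ι) :
    ∀ (L : List ι) (φ φ' : (ι → Fin n) → ℂ) (f : ι → Fin n),
      (∀ g, wt Finset.univ g = wt Finset.univ f → (∀ x, x ≠ a → x ∉ L → g x = f x) →
        φ g = φ' g) →
      chain τ γ t μ a E L φ f = chain τ γ t μ a E L φ' f
  | [], _, _, f, h => h f rfl fun _ _ _ => rfl
  | k :: L, φ, φ', f, h => by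
    have h1 : chain τ γ t μ a E L φ f = chain τ γ t μ a E L φ' f :=
      chain_congr τ γ t μ a E L φ φ' f fun g hg hx => h g hg fun x h1 h2 =>
        hx x h1 fun h3 => h2 (List.mem_cons_of_mem _ h3)
    have h2 : chain τ γ t μ a E L φ (f ∘ Equiv.swap a k) =
        chain τ γ t μ a E L φ' (f ∘ Equiv.swap a k) := by
      refine chain_congr τ γ t μ a E L φ φ' _ fun g hg hx => h g ?_ fun x h1 h2 => ?_
      · rw [hg, wt_comp_swap (by simp)]
      · simp only [List.mem_cons, not_or] at h2
        rw [hx x h1 h2.2, Function.comp_apply, Equiv.swap_apply_of_ne_of_ne h1 h2.1]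
    rw [chain, chain, dynR, dynR, h1, h2]

end Dynamical

/-! ### Matrices of operators as chains -/

lemma wt_union {ι : Type*} [DecidableEq ι] {n : ℕ} {S T : Finset ι} (h : Disjoint S T)
    (f : ι → Fin n) (i : Fin n) : wt (S ∪ T) f i = wt S f i + wt T f i := by
  unfold wt
  rw [Finset.filter_union, Finset.card_union_of_disjoint (Finset.disjoint_filter_filter h)]
  push_cast
  rfl

/-- The labelling of the auxiliary factor `none` by `j` and of the tensor factors of `W̌` by `f`. -/
def cfg {mm n : ℕ} (j : Fin n) (f : Fin mm → Fin n) : Option (Fin mm) → Fin n :=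
  fun o => o.elim j f

lemma cfg_eta {mm n : ℕ} (F : Option (Fin mm) → Fin n) : cfg (F none) (F ∘ some) = F := by
  funext x
  cases x <;> rfl

lemma wt_map_some {mm n : ℕ} (L : List (Fin mm)) (F : Option (Fin mm) → Fin n) :
    wt (L.map some).toFinset F = wt L.toFinset (F ∘ some) := by
  funext i
  have h : (L.map some).toFinset = L.toFinset.map Function.Embedding.some := by
    ext x
    simp
  unfold wt
  rw [h, Finset.filter_map, Finset.card_map]
  rfl

lemma wt_univ_option {mm n : ℕ} (F : Option (Fin mm) → Fin n) (i : Fin n) :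
    wt Finset.univ F i = wt Finset.univ (F ∘ some) i + if F none = i then 1 else 0 := by
  have h : (Finset.univ : Finset (Option (Fin mm))) =
      insert none ((Finset.univ : Finset (Fin mm)).map Function.Embedding.some) := by
    ext x
    cases x <;> simp
  rw [h, wt_insert (by simp)]
  congr 1
  unfold wt
  rw [Finset.filter_map, Finset.card_map]
  rfl

/-- A row of an R-matrix has at most two nonzero entries, the diagonal one in column `p` and the
exchange one in column `p'`; hence it acts as `rAct`. -/
lemma rm_row {P : Type*} [Fintype P] [DecidableEq P] (τ γ z : ℂ) {n : ℕ} (ν : Fin n → ℂ)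
    (i j : Fin n) (Q Ψ : P → ℂ) (p p' : P)
    (h0 : Q p = if i = j then 1 else alpha τ γ z (ν i - ν j))
    (h1 : i ≠ j → p' ≠ p ∧ Q p' = beta τ γ z (ν i - ν j))
    (h2 : i = j → p' = p) (h3 : ∀ q, q ≠ p → q ≠ p' → Q q = 0) :
    ∑ q, Q q * Ψ q = rAct τ γ z ν i j (Ψ p) (Ψ p') := by
  unfold rAct
  by_cases hij : i = j
  · rw [Fintype.sum_eq_single p fun q hq => by rw [h3 q hq (by rw [h2 hij]; exact hq), zero_mul],
      h0, if_pos hij, if_pos hij, one_mul]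
  · rw [Fintype.sum_eq_add p p' (h1 hij).1.symm fun q hq => by rw [h3 q hq.1 hq.2, zero_mul],
      h0, if_neg hij, if_neg hij, (h1 hij).2]

lemma cR0k_row (τ γ zz : ℂ) {N mm : ℕ} (lc : Fin (N - 1) → ℂ) (k : Fin mm)
    (L : List (Fin mm)) (hk : k ∉ L) (Ψ : (Option (Fin mm) → Fin (N - 1)) → ℂ)
    (p : Fin (N - 1) × (Fin mm → Fin (N - 1))) :
    ∑ q, cR0k τ γ zz (-γ) lc k L.toFinset p q * Ψ (cfg q.1 q.2) =
      dynR τ γ zz lc none (some k) (L.map some).toFinset Ψ (cfg p.1 p.2) := by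
  obtain ⟨j, f⟩ := p
  have hsw : cfg j f ∘ Equiv.swap none (some k) = cfg (f k) (Function.update f k j) := by
    funext x
    rcases x with _ | r
    · simp [cfg]
    · by_cases h : r = k
      · subst h
        simp [cfg]
      · rw [Function.comp_apply, Equiv.swap_apply_of_ne_of_ne (by simp) (by simpa using h)]
        simp [cfg, h]
  rw [dynR, hsw, wt_map_some]
  refine rm_row τ γ zz _ j (f k) (fun q => cR0k τ γ zz (-γ) lc k L.toFinset (j, f) q)
    (fun q => Ψ (cfg q.1 q.2)) (j, f) (f k, Function.update f k j) ?_ ?_ ?_ ?_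
  · simp only [cR0k, Rm, wt, sub_eq_add_neg, neg_mul, implies_true, if_true]
    rfl
  · intro h
    refine ⟨fun h' => h (congrArg Prod.fst h').symm, ?_⟩
    have hw : wt L.toFinset (Function.update f k j) = wt L.toFinset f :=
      wt_congr fun r hr => Function.update_of_ne (fun h => hk (by simpa [h] using hr)) _ _
    have hw' := fun i => congrFun hw i
    unfold wt at hw'
    have hoff : ∀ r, r ≠ k → f r = Function.update f k j r := fun r hr =>
      (Function.update_of_ne hr _ _).symm
    simp only [cR0k]
    rw [if_pos hoff]
    simp only [Rm, hw', Function.update_self, Prod.mk.injEq, h, false_and, if_false, and_self,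
      if_true, wt, sub_eq_add_neg, neg_mul]
    rfl
  · intro h
    rw [← h, h, Function.update_eq_self]
  · rintro ⟨j', g⟩ h1 h2
    simp only [cR0k]
    split_ifs with hg
    · have e : ∀ x, g k = x → g = Function.update f k x := by
        intro x hx
        funext r
        by_cases hr : r = k
        · subst hr
          simpa using hx
        · rw [Function.update_of_ne hr, hg r hr]
      simp only [Rm, Prod.mk.injEq]
      rw [if_neg, if_neg]
      · rintro ⟨ha, hb⟩
        exact h2 (by rw [hb, e _ ha.symm])
      · rintro ⟨ha, hb⟩
        exact h1 (by rw [ha, e _ hb.symm, Function.update_eq_self])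
    · rfl

/-- The monodromy matrix acts as a `chain` with auxiliary factor `none`. -/
lemma cProd_row (τ γ z : ℂ) {N mm : ℕ} (lc : Fin (N - 1) → ℂ) (t : Fin mm → ℂ) :
    ∀ (L : List (Fin mm)), L.Nodup → ∀ (Φ : (Option (Fin mm) → Fin (N - 1)) → ℂ)
      (p : Fin (N - 1) × (Fin mm → Fin (N - 1))),
      ∑ q, cProd τ γ z (-γ) lc t L p q * Φ (cfg q.1 q.2) =
        chain τ γ (fun o => o.elim z t) lc none ∅ (L.map some) Φ (cfg p.1 p.2)
  | [], _, Φ, p => by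
    simp [cProd, chain, Matrix.one_apply]
  | k :: L, hL, Φ, p => by
    rw [List.nodup_cons] at hL
    rw [List.map_cons, chain, Finset.empty_union, Option.elim_none, Option.elim_some,
      ← cR0k_row τ γ (z - t k) lc k L hL.1]
    simp only [cProd, Matrix.mul_apply, ← cProd_row τ γ z lc t L hL.2 Φ, Finset.sum_mul,
      Finset.mul_sum, mul_assoc]
    exact Finset.sum_comm

lemma cRab_row (τ γ zz : ℂ) {N mm : ℕ} (lc : Fin (N - 1) → ℂ) (a b : Fin mm)
    (S : Finset (Fin mm)) (ha : a ∉ S) (hb : b ∉ S) (Ψ : (Fin mm → Fin (N - 1)) → ℂ)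
    (f : Fin mm → Fin (N - 1)) :
    ∑ g, cRab τ γ zz lc a b S f g * Ψ g =
      rAct τ γ zz (fun i => lc i + γ * wt S f i) (f a) (f b) (Ψ f)
        (Ψ (f ∘ Equiv.swap a b)) := by
  refine rm_row τ γ zz _ (f a) (f b) (fun g => cRab τ γ zz lc a b S f g) Ψ f
    (f ∘ Equiv.swap a b) ?_ ?_ ?_ ?_
  · simp [cRab, Rm, wt]
  · intro h
    refine ⟨fun h' => h (by simpa using (congrFun h' a).symm), ?_⟩
    have hw : wt S (f ∘ Equiv.swap a b) = wt S f := wt_comp_swap (by simp [ha, hb]) f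
    have hw' := fun i => congrFun hw i
    unfold wt at hw'
    simp only [Function.comp_apply] at hw'
    have hoff : ∀ r, r ≠ a → r ≠ b → f r = f (Equiv.swap a b r) := fun r hr hr' => by
      rw [Equiv.swap_apply_of_ne_of_ne hr hr']
    simp only [cRab, Rm, Function.comp_apply, Equiv.swap_apply_left, Equiv.swap_apply_right, wt,
      hw', Prod.mk.injEq, h, false_and, if_false, and_self, if_true]
    rw [if_pos hoff]
  · intro h
    funext r
    simp only [Function.comp_apply, Equiv.swap_apply_def]
    split_ifs with h1 h2
    · rw [h1, h]
    · rw [h2, h]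
    · rfl
  · intro g h1 h2
    simp only [cRab]
    split_ifs with hg
    · simp only [Rm, Prod.mk.injEq]
      rw [if_neg, if_neg]
      · rintro ⟨hx, hy⟩
        refine h2 (funext fun r => ?_)
        simp only [Function.comp_apply, Equiv.swap_apply_def]
        split_ifs with h3 h4
        · rw [h3, hy]
        · rw [h4, hx]
        · exact (hg r h3 h4).symm
      · rintro ⟨hx, hy⟩
        refine h1 (funext fun r => ?_)
        by_cases h3 : r = a
        · rw [h3, hx]
        · by_cases h4 : r = b
          · rw [h4, hy]
          · exact (hg r h3 h4).symm
    · rfl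

lemma rAct_congr (τ γ z : ℂ) {n : ℕ} {ν ν' : Fin n → ℂ} {i j : Fin n}
    (h : i ≠ j → ν i - ν j = ν' i - ν' j) (X Y : ℂ) :
    rAct τ γ z ν i j X Y = rAct τ γ z ν' i j X Y := by
  unfold rAct
  split_ifs with hij
  · rfl
  · rw [h hij]

/-- The product of the `Ř^{(1k)}` acts as a `chain` with auxiliary factor `some a`, where `a` is the
first index. The dynamical arguments `λ̌ + γ ∑_{r>k} ȟ^{(r)}` and `μ - γ ∑_{a<r<k} ȟ^{(r)}`, with
`μ` the shift of `λ̌` by the total weight, differ by the weight of the factors `a` and `k`. This is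
invisible to `Ř^{(ak)}`, which only involves differences of the components at two distinct labels
carried by these two factors. -/
lemma scr_row (τ γ z : ℂ) {N mm : ℕ} (lc μ : Fin (N - 1) → ℂ) (t : Fin mm → ℂ) (a : Fin mm)
    (ha : ∀ r, a ≤ r) (E : Finset (Option (Fin mm))) (hE : ∀ r ∈ E, r = none) (j : Fin (N - 1)) :
    ∀ (L : List (Fin mm)), L.Pairwise (· > ·) → (∀ k ∈ L, a < k) →
      (∀ k ∈ L, ∀ r, a < r → r < k → r ∈ L) →
      ∀ (Φ : (Option (Fin mm) → Fin (N - 1)) → ℂ) (f : Fin mm → Fin (N - 1)),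
      (∀ i, μ i - γ * wt E (cfg j f) i = lc i + γ * wt Finset.univ f i) →
      chain τ γ (fun o => o.elim z t) μ (some a) E (L.map some) Φ (cfg j f) =
        ∑ g, ((L.map fun k => cRab τ γ (t a - t k) lc a k
          (Finset.univ.filter fun r => k < r)).prod) f g * Φ (cfg j g)
  | [], _, _, _, Φ, f, _ => by
    simp [chain, Matrix.one_apply]
  | k :: L, hL, hpos, hint, Φ, f, hμ => by
    have hak : a < k := hpos k List.mem_cons_self
    rw [List.pairwise_cons] at hL
    have hsw : cfg j f ∘ Equiv.swap (some a) (some k) = cfg j (f ∘ Equiv.swap a k) := by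
      funext x
      rcases x with _ | r
      · rw [Function.comp_apply, Equiv.swap_apply_of_ne_of_ne (by simp) (by simp)]
        rfl
      · simp only [Function.comp_apply, Equiv.swap_apply_def, Option.some_inj, cfg,
          Option.elim_some]
        split_ifs <;> rfl
    have ih : ∀ f, (∀ i, μ i - γ * wt E (cfg j f) i = lc i + γ * wt Finset.univ f i) →
        _ := scr_row τ γ z lc μ t a ha E hE j L hL.2
          (fun r hr => hpos r (List.mem_cons_of_mem _ hr))
          (fun r hr s hs hsr => by
            rcases List.mem_cons.mp (hint r (List.mem_cons_of_mem _ hr) s hs hsr) with h | h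
            · exact absurd (hL.1 r hr) (by rw [← h]; exact not_lt.mpr hsr.le)
            · exact h) Φ
    have hμ' : ∀ i, μ i - γ * wt E (cfg j (f ∘ Equiv.swap a k)) i =
        lc i + γ * wt Finset.univ (f ∘ Equiv.swap a k) i := by
      intro i
      rw [wt_comp_swap (by simp), ← hμ i, wt_congr (g := cfg j f)]
      intro r hr
      rw [hE r hr]
      rfl
    have hLset : L.toFinset = Finset.univ.filter fun r => a < r ∧ r < k := by
      ext r
      simp only [List.mem_toFinset, Finset.mem_filter, Finset.mem_univ, true_and]
      constructor
      · exact fun hr => ⟨hpos r (List.mem_cons_of_mem _ hr), hL.1 r hr⟩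
      · rintro ⟨h1, h2⟩
        exact (List.mem_cons.mp (hint k List.mem_cons_self r h1 h2)).resolve_left h2.ne
    have hwt : ∀ i, wt Finset.univ f i = wt (Finset.univ.filter fun r => k < r) f i +
        wt L.toFinset f i + (if f k = i then 1 else 0) + if f a = i then 1 else 0 := by
      intro i
      rw [← wt_union, ← wt_insert, ← wt_insert]
      · congr 1
        ext r
        have := ha r
        simp only [hLset, Finset.mem_univ, Finset.mem_insert, Finset.mem_union, Finset.mem_filter,
          true_and, true_iff]
        omega
      · simp only [hLset, Finset.mem_insert, Finset.mem_union, Finset.mem_filter]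
        omega
      · simp [hLset]
      · rw [hLset, Finset.disjoint_filter]
        intro r _ h1 h2
        exact absurd h1 (not_lt.mpr h2.2.le)
    have hE' : Disjoint E (L.map some).toFinset := by
      rw [Finset.disjoint_left]
      intro r hr
      rw [hE r hr]
      simp
    rw [List.map_cons, chain, dynR, hsw, ih f hμ, ih _ hμ']
    simp only [Option.elim_some, List.map_cons, List.prod_cons, Matrix.mul_apply, Finset.sum_mul,
      mul_assoc]
    rw [Finset.sum_comm]
    simp only [← Finset.mul_sum]
    rw [cRab_row τ γ _ lc a k _ (by simp [hak.le]) (by simp)]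
    refine rAct_congr _ _ _ (fun hne => ?_) _ _
    have e : ∀ i, μ i - γ * wt (E ∪ (L.map some).toFinset) (cfg j f) i =
        lc i + γ * wt (Finset.univ.filter fun r => k < r) f i +
          γ * ((if f k = i then 1 else 0) + if f a = i then 1 else 0) := by
      intro i
      rw [wt_union hE', wt_map_some]
      have h1 := hμ i
      rw [hwt i] at h1
      have h2 : cfg j f ∘ some = f := rfl
      rw [h2]
      linear_combination h1
    have hne' : f a ≠ f k := hne
    have hne'' := hne'.symm
    change μ (f a) - γ * wt _ (cfg j f) (f a) - (μ (f k) - γ * wt _ (cfg j f) (f k)) =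
      lc (f a) + γ * wt _ f (f a) - (lc (f k) + γ * wt _ f (f k))
    rw [e, e]
    simp only [hne', hne'', if_true, if_false]
    ring

/-! ### Transfer matrices -/

lemma iot_injective {N : ℕ} : Function.Injective (iot : Fin (N - 1) → Fin N) := fun a b h => by
  simpa [iot, Fin.ext_iff] using h

/-- The number of factors carrying a given label of `ℂ^N` only depends on the weight; the first
label does not occur. -/
lemma card_iot_congr {N mm : ℕ} {f g : Fin mm → Fin (N - 1)}
    (h : wt Finset.univ f = wt Finset.univ g) (a : Fin N) :
    (((Finset.univ.filter fun k => iot (f k) = a).card : ℕ) : ℂ) =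
      (((Finset.univ.filter fun k => iot (g k) = a).card : ℕ) : ℂ) := by
  by_cases ha : ∃ i, iot i = a
  · obtain ⟨i, rfl⟩ := ha
    simpa only [wt, iot_injective.eq_iff] using congrFun h i
  · push Not at ha
    simp [ha]

lemma wt_singleton {ι : Type*} [DecidableEq ι] {n : ℕ} (a : ι) (f : ι → Fin n) (i : Fin n) :
    wt {a} f i = if f a = i then 1 else 0 := by
  rw [← insert_empty_eq, wt_insert (Finset.notMem_empty a)]
  simp [wt]

lemma wt_comp_some {mm n : ℕ} {F : Option (Fin mm) → Fin n} {j : Fin n} {f : Fin mm → Fin n}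
    (h : wt Finset.univ F = wt Finset.univ (cfg j f)) (hj : F none = j) :
    wt Finset.univ (F ∘ some) = wt Finset.univ f := by
  funext i
  have h1 := congrFun h i
  rw [wt_univ_option, wt_univ_option, hj] at h1
  exact add_right_cancel h1

/-- The argument `λ̌ + γ ∑_k ȟ^{(k)}` on the basis vector labelled by `f`. -/
def muOf (γ : ℂ) {N mm : ℕ} (lam : Fin N → ℂ) (f : Fin mm → Fin (N - 1)) : Fin (N - 1) → ℂ :=
  fun i => lam (iot i) + γ * wt Finset.univ f i

/-- The values of `ψ` after the shift `Γ̌^{(0)}`, restricted to label `j` of the auxiliary factor: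
the summand of the trace `tr^{(0)}` with index `j`. -/
def trPart (γ : ℂ) {N mm : ℕ} (ψ : (Fin N → ℂ) → (Fin mm → Fin (N - 1)) → ℂ) (lam : Fin N → ℂ)
    (j : Fin (N - 1)) (F : Option (Fin mm) → Fin (N - 1)) : ℂ :=
  if F none = j then ψ (shift1 γ lam (iot j)) (F ∘ some) else 0

/-- The transfer matrix as a trace of chains. The conjugation by `Γ̌^{(1,…,m)}` disappears because
the monodromy matrix conserves the total weight, and on diagonal blocks of the auxiliary factor also
the weight of `W̌`. -/
lemma cTransfer_eq (τ γ z : ℂ) {N mm : ℕ} (t : Fin mm → ℂ) (ks : List (Fin mm)) (hks : ks.Nodup)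
    (ψ : (Fin N → ℂ) → (Fin mm → Fin (N - 1)) → ℂ) (lam : Fin N → ℂ)
    (f : Fin mm → Fin (N - 1)) :
    cTransfer τ γ t ks z ψ lam f =
      ∑ j, chain τ γ (fun o => o.elim z t) (muOf γ lam f) none ∅ (ks.map some)
        (trPart γ ψ lam j) (cfg j f) := by
  rw [cTransfer, gammaTot]
  refine Finset.sum_congr rfl fun j _ => ?_
  set lam' : Fin N → ℂ := fun a => lam a + 1 * γ *
      (((Finset.univ.filter (fun k => iot (f k) = a)).card : ℕ) : ℂ) with hlam'
  have hmu : (fun a => lam' (iot a)) = muOf γ lam f := by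
    funext i
    simp only [hlam', muOf, wt, iot_injective.eq_iff, one_mul]
  have h1 := cProd_row τ γ z (fun a => lam' (iot a)) t ks hks
    (fun F => if F none = j then gammaTot γ (-1) ψ (shift1 γ lam' (iot j)) (F ∘ some) else 0)
    (j, f)
  rw [hmu] at h1 ⊢
  rw [Fintype.sum_prod_type, Fintype.sum_eq_single j] at h1
  · have h2 : ∀ g : Fin mm → Fin (N - 1), cfg j g ∘ some = g := fun _ => rfl
    have h3 : ∀ g : Fin mm → Fin (N - 1), cfg j g none = j := fun _ => rfl
    simp only [h2, h3, if_true] at h1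
    rw [h1]
    refine chain_congr _ _ _ _ _ _ _ _ _ _ fun F hF _ => ?_
    unfold trPart gammaTot
    split_ifs with hj
    · congr 1
      funext a
      have h4 := card_iot_congr (wt_comp_some hF hj) a
      simp only [shift1, hlam', h4]
      ring
    · rfl
  · intro i hi
    refine Finset.sum_eq_zero fun g _ => ?_
    have h3 : cfg i g none = i := rfl
    rw [h3, if_neg hi, mul_zero]

lemma finRange_reverse {mm : ℕ} (h0 : 0 < mm) :
    (List.finRange mm).reverse = (List.finRange mm).reverse.dropLast ++ [⟨0, h0⟩] := by
  obtain ⟨n, rfl⟩ := Nat.exists_eq_add_one.mpr h0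
  rw [List.finRange_succ, List.reverse_cons, List.dropLast_concat]
  rfl

lemma pairwise_dropLast (mm : ℕ) : ((List.finRange mm).reverse.dropLast).Pairwise (· > ·) :=
  (List.pairwise_reverse.mpr (List.pairwise_lt_finRange mm)).sublist (List.dropLast_sublist _)

lemma mem_dropLast {mm : ℕ} (h0 : 0 < mm) (k : Fin mm) :
    k ∈ (List.finRange mm).reverse.dropLast ↔ ⟨0, h0⟩ < k := by
  have h1 : (List.finRange mm).reverse.Nodup := List.nodup_reverse.mpr (List.nodup_finRange mm)
  have h2 : k ∈ (List.finRange mm).reverse := by simp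
  rw [finRange_reverse h0] at h1 h2
  have h3 : (⟨0, h0⟩ : Fin mm) ∉ (List.finRange mm).reverse.dropLast := by
    intro h
    exact (List.nodup_append.mp h1).2.2 _ h _ List.mem_cons_self rfl
  constructor
  · intro hk
    refine lt_of_le_of_ne (Nat.zero_le _) ?_
    rintro rfl
    exact h3 hk
  · intro hk
    rcases List.mem_append.mp h2 with h | h
    · exact h
    · rw [List.mem_singleton] at h
      exact absurd h hk.ne'

/-- `𝓡̌^{(1;m,…,2)}` as a `chain`. -/
lemma scrR_row (τ γ z : ℂ) {N mm : ℕ} (h0 : 0 < mm) (lc μ : Fin (N - 1) → ℂ) (t : Fin mm → ℂ)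
    (E : Finset (Option (Fin mm))) (hE : ∀ r ∈ E, r = none) (j : Fin (N - 1))
    (Φ : (Option (Fin mm) → Fin (N - 1)) → ℂ) (f : Fin mm → Fin (N - 1))
    (hμ : ∀ i, μ i - γ * wt E (cfg j f) i = lc i + γ * wt Finset.univ f i) :
    ∑ g, scrR τ γ h0 t lc f g * Φ (cfg j g) =
      chain τ γ (fun o => o.elim z t) μ (some ⟨0, h0⟩) E
        ((List.finRange mm).reverse.dropLast.map some) Φ (cfg j f) :=
  (scr_row τ γ z lc μ t ⟨0, h0⟩ (fun _ => Nat.zero_le _) E hE j _ (pairwise_dropLast mm)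
    (fun k hk => (mem_dropLast h0 k).mp hk) (fun _ _ r hr _ => (mem_dropLast h0 r).mpr hr) Φ f
    hμ).symm

/-- The intertwining relation for arbitrary `N` and an arbitrary number of tensor factors. -/
lemma transfer_intertwine {τ : ℂ} (hτ : 0 < τ.im) (γ z : ℂ) {N mm : ℕ} (h0 : 0 < mm)
    (t : Fin mm → ℂ) (ψ : (Fin N → ℂ) → (Fin mm → Fin (N - 1)) → ℂ) (lam : Fin N → ℂ)
    (hlam : ∀ c : ℤ, |c| ≤ 2 * mm → ∀ a b, a ≠ b → theta τ (lam a - lam b + c * γ) ≠ 0)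
    (hz : ∀ k, theta τ (z - t k - γ) ≠ 0)
    (ht : ∀ k k', k ≠ k' → theta τ (t k - t k' - γ) ≠ 0) (f : Fin mm → Fin (N - 1)) :
    cTransfer τ γ t (seqOne mm h0) z
        (fun lam' h => ∑ g, scrR τ γ h0 t (fun a => lam' (iot a)) h g * ψ lam' g) lam f =
      ∑ g, scrR τ γ h0 t (fun a => lam (iot a)) f g *
        cTransfer τ γ t (seqRev mm) z ψ lam g := by
  set L : List (Fin mm) := (List.finRange mm).reverse.dropLast with hLdef
  have hLnd : L.Nodup := (pairwise_dropLast mm).imp ne_of_gt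
  have h0L : (⟨0, h0⟩ : Fin mm) ∉ L := fun h => lt_irrefl _ ((mem_dropLast h0 _).mp h)
  have hrev : seqRev mm = L ++ [⟨0, h0⟩] := finRange_reverse h0
  have hrevnd : (seqRev mm).Nodup := List.nodup_reverse.mpr (List.nodup_finRange mm)
  have hlen : L.length ≤ mm := by simp [hLdef]
  have honend : (seqOne mm h0).Nodup := List.nodup_cons.mpr ⟨h0L, hLnd⟩
  rw [cTransfer_eq τ γ z t _ honend]
  simp only [cTransfer_eq τ γ z t _ hrevnd, Finset.mul_sum]
  rw [Finset.sum_comm]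
  refine Finset.sum_congr rfl fun j _ => ?_
  have hR := scrR_row τ γ z h0 (fun a => lam (iot a)) (muOf γ lam f) t ∅ (by simp) j
    (fun F => chain τ γ (fun o => o.elim z t) (muOf γ lam (F ∘ some)) none ∅
      ((seqRev mm).map some) (trPart γ ψ lam j) (cfg j (F ∘ some))) f
    (fun i => by simp [muOf, wt])
  have e1 : ∀ g : Fin mm → Fin (N - 1), cfg j g ∘ some = g := fun _ => rfl
  simp only [e1] at hR
  rw [hR, ← hLdef]
  rw [chain_congr τ γ _ _ _ _ (L.map some) _ (chain τ γ (fun o => o.elim z t) (muOf γ lam f) none ∅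
      ((seqRev mm).map some) (trPart γ ψ lam j)) (cfg j f)]
  swap
  · intro F hF hx
    have hj : F none = j := hx none (by simp) (by simp)
    have e2 : cfg j (F ∘ some) = F := by rw [← hj, cfg_eta]
    have e3 : muOf γ lam (F ∘ some) = muOf γ lam f := by
      unfold muOf
      rw [wt_comp_some hF hj]
    rw [e2, e3]
  rw [chain_congr τ γ _ _ _ _ ((seqOne mm h0).map some) _
    (chain τ γ (fun o => o.elim z t) (muOf γ lam f) (some ⟨0, h0⟩) {none} (L.map some)
      (trPart γ ψ lam j)) (cfg j f)]
  swap
  · intro F hF _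
    by_cases hj : F none = j
    · have hs := scrR_row τ γ z h0 (fun a => shift1 γ lam (iot j) (iot a)) (muOf γ lam f) t
        {none} (by simp) j (trPart γ ψ lam j) (F ∘ some) (fun i => by
          rw [wt_comp_some hF hj]
          rw [wt_singleton, show cfg j (F ∘ some) none = j from rfl]
          simp only [muOf, shift1, iot_injective.eq_iff, eq_comm (a := i)]
          split_ifs <;> ring)
      rw [show cfg j (F ∘ some) = F by rw [← hj, cfg_eta]] at hs
      rw [← hs, trPart, if_pos hj]
      refine Finset.sum_congr rfl fun g _ => ?_
      rw [trPart, if_pos (show cfg j g none = j from rfl), e1]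
    · -- on the blocks `F none ≠ j` both sides vanish
      have hs := scrR_row τ γ z h0
        (fun i => muOf γ lam f i - γ * wt {none} F i - γ * wt Finset.univ (F ∘ some) i)
        (muOf γ lam f) t {none} (by simp) (F none) (trPart γ ψ lam j) (F ∘ some) (fun i => by
          rw [cfg_eta]
          ring)
      rw [cfg_eta] at hs
      rw [← hs, trPart, if_neg hj]
      refine (Finset.sum_eq_zero fun g _ => ?_).symm
      rw [trPart, if_neg (show cfg (F none) g none ≠ j from hj), mul_zero]
  have key := chain_exchange hτ (γ := γ) (t := fun o : Option (Fin mm) => o.elim z t)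
    (μ := muOf γ lam f) (o := none) (a := some ⟨0, h0⟩) (by simp) (K := mm) (hz _) ?_
    (L.map some) (trPart γ ψ lam j) (by simp) (by simpa using h0L)
    (hLnd.map (Option.some_injective _)) (by simpa using hlen) ?_
  · rw [hrev, List.map_append]
    exact congrFun key _
  · intro c hc p q hpq
    have hcard : ∀ i, ((Finset.univ.filter fun r => f r = i).card : ℤ) ≤ mm := fun i => by
      have := Finset.card_le_univ (Finset.univ.filter fun r => f r = i)
      rw [Fintype.card_fin] at this
      exact_mod_cast this
    have h := hlam (c + (Finset.univ.filter fun r => f r = p).card -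
      (Finset.univ.filter fun r => f r = q).card) (by
        have h1 := hcard p
        have h2 := hcard q
        rw [abs_le] at hc ⊢
        constructor <;> omega) (iot p) (iot q) (iot_injective.ne hpq)
    convert h using 2
    simp only [muOf, wt]
    push_cast
    ring
  · intro k hk
    obtain ⟨r, hr, rfl⟩ := List.mem_map.mp hk
    exact ⟨hz r, ht _ _ ((mem_dropLast h0 r).mp hr).ne⟩

/-- the nested transfer matrices intertwine with the product of
R-matrices: `𝒯̌^{(1,m,m-1,…,2)}(z) ∘ 𝓡̌^{(1;m,…,2)} = 𝓡̌^{(1;m,…,2)} ∘ 𝒯̌^{(m,m-1,…,1)}(z)`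
as operators on `W̌`-valued functions of `λ` (`N = M+2`, `ℓ = l+1`,
`m = (N-1)ℓ`), written pointwise at a generic point `λ`; `𝓡̌^{(1;m,…,2)}` acts
by pointwise multiplication in `λ`. -/
theorem statement15 (τ γ : ℂ) (hτ : 0 < τ.im) (M l : ℕ) (z : ℂ)
    (t : Fin ((M + 1) * (l + 1)) → ℂ)
    (ψ : (Fin (M + 2) → ℂ) → (Fin ((M + 1) * (l + 1)) → Fin (M + 1)) → ℂ)
    (lam : Fin (M + 2) → ℂ)
    (hlam : ∀ c : ℤ, |c| ≤ 3 * ((M + 2) * (l + 1) + 2) →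
      ∀ a b : Fin (M + 2), a ≠ b → theta τ (lam a - lam b + c * γ) ≠ 0)
    (hzt : ∀ c : ℤ, |c| ≤ (M + 2) * (l + 1) + 2 →
      (∀ k, theta τ (z - t k + c * γ) ≠ 0) ∧
      (∀ k k', k ≠ k' → theta τ (t k - t k' + c * γ) ≠ 0)) :
    ∀ f, cTransfer τ γ t (seqOne ((M + 1) * (l + 1)) (Nat.mul_pos M.succ_pos l.succ_pos)) z
          (fun lam' h => ∑ g,
            scrR τ γ (Nat.mul_pos M.succ_pos l.succ_pos) t (fun a => lam' (iot a)) h g *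
              ψ lam' g) lam f
      = ∑ g, scrR τ γ (Nat.mul_pos M.succ_pos l.succ_pos) t (fun a => lam (iot a)) f g *
          cTransfer τ γ t (seqRev ((M + 1) * (l + 1))) z ψ lam g := by
  have hm : (1 : ℤ) ≤ (M + 2) * (l + 1) + 2 := by
    have : (0 : ℤ) ≤ (M + 2) * (l + 1) := by positivity
    linarith
  have hm1 : |(-1 : ℤ)| ≤ (M + 2) * (l + 1) + 2 := by simpa using hm
  refine transfer_intertwine hτ γ z (N := M + 2) (Nat.mul_pos M.succ_pos l.succ_pos) t ψ lam
    (fun c hc a b hab => hlam c (hc.trans ?_) a b hab) (fun k => ?_) (fun k k' hk => ?_)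
  · push_cast
    nlinarith [mul_nonneg (Int.natCast_nonneg M) (Int.natCast_nonneg l), Int.natCast_nonneg M,
      Int.natCast_nonneg l]
  · have h := (hzt (-1) hm1).1 k
    simpa [sub_eq_add_neg] using h
  · have h := (hzt (-1) hm1).2 k k' hk
    simpa [sub_eq_add_neg] using h
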